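/- If a transcendental entire function f has a Baker wandering domain, then ∞ is the Baker omitted value of f; i.e., the image of every unbounded curve under f is unbounded. -/

import Mathlib

open Complex Metric Bornology Topology Filter Set OnePoint

/-- `z₀` is a pole of `f` : `f → ∞` near `z₀`. -/
def IsPole (f : ℂ → ℂ) (z₀ : ℂ) : Prop :=
  Tendsto f (𝓝[≠] z₀) (Bornology.cobounded ℂ)

/-- `f` is a transcendental meromorphic function on `ℂ`
(meromorphic everywhere and not a rational function). -/
def TranscMero (f : ℂ → ℂ) : Prop :=
  MeromorphicOn f Set.univ ∧
    ¬ ∃ p q : Polynomial ℂ, q ≠ 0 ∧ ∀ z, f z * q.eval z = p.eval z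

/-- `f` is a transcendental entire function. -/
def TranscEntire (f : ℂ → ℂ) : Prop :=
  Differentiable ℂ f ∧ ¬ ∃ p : Polynomial ℂ, f = fun z => p.eval z

/-- Preimage under the meromorphic function `f` of the ball `D_r(a)`
(poles, where the `ℂ`-valued representative carries a junk value, are excluded). -/
def preimBall (f : ℂ → ℂ) (a : ℂ) (r : ℝ) : Set ℂ :=
  {z | ¬ IsPole f z ∧ f z ∈ Metric.ball a r}

/-- Every connected component of `S` is a bounded subset of `ℂ`. -/
def BoundedComponents (S : Set ℂ) : Prop :=
  ∀ z ∈ S, Bornology.IsBounded (connectedComponentIn S z)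

/-- `S ⊆ ℂ` is infinitely connected: its complement has infinitely many
connected components. -/
def InfConnected (S : Set ℂ) : Prop :=
  {C : Set ℂ | ∃ z ∈ Sᶜ, C = connectedComponentIn Sᶜ z}.Infinite

/-- `a ∈ ℂ` is a Baker omitted value of the meromorphic function `f`:
`a` is omitted and, for all sufficiently small `r > 0`, every component of the
boundary of `f⁻¹(D_r(a))` is bounded. -/
def BakerOmittedValue (f : ℂ → ℂ) (a : ℂ) : Prop :=
  (∀ z, ¬ IsPole f z → f z ≠ a) ∧
    ∃ r₀ > 0, ∀ r, 0 < r → r < r₀ →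
      BoundedComponents (frontier (preimBall f a r))

/-- `∞` is a Baker omitted value of the entire function `f`: for every large
enough `R`, every component of the boundary of `f⁻¹({|w| > R})` is bounded. -/
def BakerOmittedValueInf (f : ℂ → ℂ) : Prop :=
  ∃ R₀ > 0, ∀ R, R₀ < R → BoundedComponents (frontier {z | R < ‖f z‖})

/-- Baker omitted value at a point of the Riemann sphere `ℂ ∪ {∞}`. -/
def BakerOmittedValueSph (f : ℂ → ℂ) (v : OnePoint ℂ) : Prop :=
  (v = ∞ ∧ (∀ z, ¬ IsPole f z) ∧ BakerOmittedValueInf f) ∨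
    (∃ a : ℂ, v = ↑a ∧ BakerOmittedValue f a)

/-- `b ∈ ℂ` is a (finite) asymptotic value of `f`. -/
def AsympValue (f : ℂ → ℂ) (b : ℂ) : Prop :=
  ∃ γ : ℝ → ℂ, ContinuousOn γ (Set.Ici 0) ∧
    Tendsto γ atTop (Bornology.cobounded ℂ) ∧
    Tendsto (fun t => f (γ t)) atTop (𝓝 b)

/-- `∞` is an asymptotic value of `f`. -/
def AsympValueInf (f : ℂ → ℂ) : Prop :=
  ∃ γ : ℝ → ℂ, ContinuousOn γ (Set.Ici 0) ∧
    Tendsto γ atTop (Bornology.cobounded ℂ) ∧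
    Tendsto (fun t => f (γ t)) atTop (Bornology.cobounded ℂ)

/-- uniform divergence to `∞` of a sequence of functions on `K`. -/
def UnifDiverges (F : ℕ → ℂ → ℂ) (K : Set ℂ) : Prop :=
  ∀ M : ℝ, ∀ᶠ n in atTop, ∀ z ∈ K, M < ‖F n z‖

/-- The iterates of `f` form a normal family on `U`: every subsequence has a
further subsequence converging locally uniformly on `U`, either to a finite
limit function or to `∞`. -/
def NormalOn (f : ℂ → ℂ) (U : Set ℂ) : Prop :=
  ∀ s : ℕ → ℕ, StrictMono s → ∃ t : ℕ → ℕ, StrictMono t ∧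
    ((∃ g : ℂ → ℂ, TendstoLocallyUniformlyOn (fun n => f^[s (t n)]) g atTop U) ∨
      (∀ K ⊆ U, IsCompact K → UnifDiverges (fun n => f^[s (t n)]) K))

/-- The Fatou set of `f`. -/
def FatouSet (f : ℂ → ℂ) : Set ℂ :=
  {z | ∃ U : Set ℂ, IsOpen U ∧ z ∈ U ∧ NormalOn f U}

/-- `U` is a Fatou component of `f`. -/
def IsFatouComponent (f : ℂ → ℂ) (U : Set ℂ) : Prop :=
  ∃ z ∈ FatouSet f, U = connectedComponentIn (FatouSet f) z

/-- `U` surrounds `0`: `0` lies in a bounded complementary component of `U`. -/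
def SurroundsZero (U : Set ℂ) : Prop :=
  0 ∉ U ∧ Bornology.IsBounded (connectedComponentIn Uᶜ 0)

/-- `U` is multiply connected: its complement has a bounded component. -/
def MultiplyConnected (U : Set ℂ) : Prop :=
  ∃ w ∉ U, Bornology.IsBounded (connectedComponentIn Uᶜ w)

/-- `U` is a Baker wandering domain of `f`. -/
def IsBakerWanderingDomain (f : ℂ → ℂ) (U : Set ℂ) : Prop :=
  ∃ z₀ ∈ FatouSet f, U = connectedComponentIn (FatouSet f) z₀ ∧
    (∀ m n : ℕ, m ≠ n →
      connectedComponentIn (FatouSet f) (f^[m] z₀) ≠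
        connectedComponentIn (FatouSet f) (f^[n] z₀)) ∧
    (∃ N : ℕ, ∀ n ≥ N,
      Bornology.IsBounded (connectedComponentIn (FatouSet f) (f^[n] z₀)) ∧
      MultiplyConnected (connectedComponentIn (FatouSet f) (f^[n] z₀)) ∧
      SurroundsZero (connectedComponentIn (FatouSet f) (f^[n] z₀))) ∧
    (∀ z ∈ U, Tendsto (fun n => f^[n] z) atTop (Bornology.cobounded ℂ))

/-- `U` is a completely invariant set for `f`. -/
def CompletelyInvariant (f : ℂ → ℂ) (U : Set ℂ) : Prop :=
  f '' U ⊆ U ∧ f ⁻¹' U ⊆ U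

/-!
Let `W` be a multiply connected Fatou component in which some orbit escapes. Normality spreads the
escape over `W`, uniformly on compact sets. Enclose a hole of `W` in a compact set `K` with
`frontier K ⊆ W`: the iterates diverge uniformly on `frontier K` but not on `K`, since otherwise
`K` would lie in the Fatou set and the hole would be joined to `W` inside it. As `f^[n]` is open,
`f^[n] '' K` has its frontier inside `f^[n] '' frontier K`, so for infinitely many `n` it contains
any prescribed disc. If `Γ` is connected and `f` is bounded on `Γ`, then `Γ` misses
`f^[n] '' frontier K` for large `n`, because `f` is large there. Hence `Γ` stays inside the compact
set `f^[n] '' K` as soon as one of its points does.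
-/

section Topology

variable {X Y : Type*} [TopologicalSpace X] [TopologicalSpace Y]

theorem subset_of_isPreconnected_of_disjoint_frontier {s t : Set X} (hs : IsPreconnected s)
    (hst : (s ∩ t).Nonempty) (hd : Disjoint s (frontier t)) : s ⊆ t := by
  have hcover : s ⊆ interior t ∪ (closure t)ᶜ := fun x hx => by
    by_cases hxt : x ∈ closure t
    · exact .inl (by_contra fun hxi => disjoint_left.1 hd hx ⟨hxt, hxi⟩)
    · exact .inr hxt
  have hmeet : (s ∩ interior t).Nonempty := by
    obtain ⟨x, hxs, hxt⟩ := hst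
    exact ⟨x, hxs, (hcover hxs).resolve_right (not_not_intro (subset_closure hxt))⟩
  have hdisj : Disjoint (interior t) (closure t)ᶜ :=
    disjoint_compl_right_iff_subset.2 interior_subset_closure
  exact (hs.subset_left_of_subset_union isOpen_interior isClosed_closure.isOpen_compl
    hdisj hcover hmeet).trans interior_subset

theorem frontier_image_subset_of_isOpenMap {f : X → Y} (hf : IsOpenMap f) {s : Set X}
    (hs : IsClosed (f '' s)) : frontier (f '' s) ⊆ f '' frontier s := by
  intro y hy
  obtain ⟨x, hxs, rfl⟩ := hs.frontier_subset hy
  exact ⟨x, ⟨subset_closure hxs, fun hxi => hy.2 (hf.image_interior_subset s ⟨x, hxi, rfl⟩)⟩, rfl⟩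

theorem subset_image_of_disjoint_image_frontier {f : X → Y} (hf : IsOpenMap f) {K : Set X}
    {s : Set Y} (hK : IsClosed (f '' K)) (hs : IsPreconnected s) (hsK : (s ∩ f '' K).Nonempty)
    (hd : Disjoint s (f '' frontier K)) : s ⊆ f '' K :=
  subset_of_isPreconnected_of_disjoint_frontier hs hsK
    (hd.mono_right (frontier_image_subset_of_isOpenMap hf hK))

theorem isOpenMap_iterate {f : X → X} (hf : IsOpenMap f) : ∀ n, IsOpenMap f^[n]
  | 0 => IsOpenMap.id
  | n + 1 => (isOpenMap_iterate hf n).comp hf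

theorem isClosed_connectedComponentIn {F : Set X} (hF : IsClosed F) (x : X) :
    IsClosed (connectedComponentIn F x) := by
  by_cases hx : x ∈ F
  · rw [connectedComponentIn_eq_image hx]
    exact hF.isClosedMap_subtype_val _ isClosed_connectedComponent
  · exact connectedComponentIn_eq_empty hx ▸ isClosed_empty

theorem connectedComponentIn_inter_frontier_nonempty [PreconnectedSpace X]
    [LocallyConnectedSpace X] {F K : Set X} {x : X} (hF : IsOpen F) (hK : IsClosed K)
    (hKF : K ⊆ F) (hK_ne : K ≠ univ) (hx : x ∈ K) :
    (connectedComponentIn F x ∩ frontier K).Nonempty := by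
  by_contra hempty
  set C := connectedComponentIn F x
  have hxC : x ∈ C := mem_connectedComponentIn (hKF hx)
  have hCK : C ⊆ K := subset_of_isPreconnected_of_disjoint_frontier
    isPreconnected_connectedComponentIn ⟨x, hxC, hx⟩
    (disjoint_iff_inter_eq_empty.2 (not_nonempty_iff_eq_empty.1 hempty))
  have hC : IsClosed C := isClosed_of_closure_subset <|
    isPreconnected_connectedComponentIn.closure.subset_connectedComponentIn (subset_closure hxC)
      ((closure_minimal hCK hK).trans hKF)
  have hCuniv : C = univ := IsClopen.eq_univ ⟨hC, hF.connectedComponentIn⟩ ⟨x, hxC⟩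
  exact hK_ne (univ_subset_iff.1 (hCuniv ▸ hCK))

theorem exists_isClopen_subset_of_connectedComponent_subset [CompactSpace X] [T2Space X]
    {x : X} {U : Set X} (hU : IsOpen U) (hxU : connectedComponent x ⊆ U) :
    ∃ Z, IsClopen Z ∧ x ∈ Z ∧ Z ⊆ U := by
  let ι := {Z : Set X // IsClopen Z ∧ x ∈ Z}
  have : Nonempty ι := ⟨⟨univ, isClopen_univ, mem_univ x⟩⟩
  have hdir : Directed (· ⊇ ·) (Subtype.val : ι → Set X) := fun Z₁ Z₂ =>
    ⟨⟨Z₁ ∩ Z₂, Z₁.2.1.inter Z₂.2.1, Z₁.2.2, Z₂.2.2⟩, inter_subset_left, inter_subset_right⟩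
  obtain ⟨Z, hZU⟩ := exists_subset_nhds_of_compactSpace hdir (fun Z => Z.2.1.isClosed)
    fun y hy => hU.mem_nhds (hxU ((connectedComponent_eq_iInter_isClopen x).ge hy))
  exact ⟨Z, Z.2.1, Z.2.2, hZU⟩

theorem exists_isCompact_isOpen_subset_of_connectedComponent_subset [LocallyCompactSpace X]
    [T2Space X] {x : X} {U : Set X} (hx : IsCompact (connectedComponent x)) (hU : IsOpen U)
    (hxU : connectedComponent x ⊆ U) : ∃ Z, IsCompact Z ∧ IsOpen Z ∧ x ∈ Z ∧ Z ⊆ U := by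
  obtain ⟨L, hL, hxL, hLU⟩ := exists_compact_between hx hU hxU
  have : CompactSpace L := isCompact_iff_compactSpace.1 hL
  let x' : L := ⟨x, interior_subset (hxL mem_connectedComponent)⟩
  have hx' : connectedComponent x' ⊆ (↑) ⁻¹' interior L := fun y hy =>
    hxL (continuous_subtype_val.image_connectedComponent_subset x' ⟨y, hy, rfl⟩)
  obtain ⟨Z, hZ, hxZ, hZL⟩ := exists_isClopen_subset_of_connectedComponent_subset
    (isOpen_interior.preimage continuous_subtype_val) hx'
  obtain ⟨G, hG, rfl⟩ := isOpen_induced_iff.1 hZ.isOpen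
  have himage : ((↑) '' ((↑) ⁻¹' G : Set L) : Set X) = interior L ∩ G := by
    rw [Subtype.image_preimage_coe]
    exact Subset.antisymm (fun y hy => ⟨hZL (show (⟨y, hy.1⟩ : L) ∈ _ from hy.2), hy.2⟩)
      (inter_subset_inter_left G interior_subset)
  refine ⟨(↑) '' ((↑) ⁻¹' G : Set L), hZ.isClosed.isCompact.image continuous_subtype_val,
    himage ▸ isOpen_interior.inter hG, ⟨x', hxZ, rfl⟩, ?_⟩
  exact (Subtype.coe_image_subset L _).trans hLU

theorem exists_isCompact_disjoint_frontier_of_isCompact_connectedComponentIn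
    [LocallyCompactSpace X] [T2Space X] {F : Set X} {x : X} (hF : IsClosed F) (hx : x ∈ F)
    (hc : IsCompact (connectedComponentIn F x)) :
    ∃ K, IsCompact K ∧ x ∈ K ∧ Disjoint (frontier K) F := by
  have : LocallyCompactSpace F := hF.locallyCompactSpace
  rw [connectedComponentIn_eq_image hx, ← IsEmbedding.subtypeVal.isCompact_iff] at hc
  obtain ⟨Z, hZc, hZo, hxZ, -⟩ :=
    exists_isCompact_isOpen_subset_of_connectedComponent_subset hc isOpen_univ (subset_univ _)
  obtain ⟨G, hG, rfl⟩ := isOpen_induced_iff.1 hZo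
  obtain ⟨K, hK, hZK, hKG⟩ := exists_compact_between (hZc.image continuous_subtype_val) hG
    (image_preimage_subset _ G)
  refine ⟨K, hK, interior_subset (hZK ⟨_, hxZ, rfl⟩), disjoint_left.2 fun y hyK hyF => hyK.2 ?_⟩
  exact hZK ⟨⟨y, hyF⟩, hKG (hK.isClosed.frontier_subset hyK), rfl⟩

end Topology

section UniformDivergence

variable {F : ℕ → ℂ → ℂ} {K : Set ℂ}

theorem UnifDiverges.tendsto_cobounded {z : ℂ} (h : UnifDiverges F K) (hz : z ∈ K) :
    Tendsto (fun n => F n z) atTop (cobounded ℂ) :=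
  tendsto_norm_atTop_iff_cobounded.1 <|
    tendsto_atTop.2 fun M => (h M).mono fun _ hn => (hn z hz).le

theorem unifDiverges_of_forall_exists_nhdsWithin (hK : IsCompact K)
    (h : ∀ z ∈ K, ∃ L ∈ 𝓝[K] z, UnifDiverges F L) : UnifDiverges F K := by
  intro M
  refine hK.induction_on (p := fun S => ∀ᶠ n in atTop, ∀ z ∈ S, M < ‖F n z‖) ?_ ?_ ?_ ?_
  · simp
  · exact fun S T hST hT => hT.mono fun n hn z hz => hn z (hST hz)
  · intro S T hS hT
    filter_upwards [hS, hT] with n hnS hnT z hz using hz.elim (hnS z) (hnT z)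
  · intro z hz
    obtain ⟨L, hL, hdiv⟩ := h z hz
    exact ⟨L, hL, hdiv M⟩

theorem frequently_closedBall_subset_image (hFc : ∀ n, Continuous (F n))
    (hFo : ∀ n, IsOpenMap (F n)) (hK : IsCompact K) (hfr : UnifDiverges F (frontier K))
    (hdiv : ¬ UnifDiverges F K) (R : ℝ) :
    ∃ᶠ n in atTop, closedBall 0 R ⊆ F n '' K := by
  obtain ⟨M, hM⟩ : ∃ M, ∃ᶠ n in atTop, ∃ z ∈ K, ‖F n z‖ ≤ M := by
    simpa only [UnifDiverges, not_forall, not_eventually, not_lt, exists_prop] using hdiv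
  refine (hM.and_eventually (hfr (max M R))).mono ?_
  rintro n ⟨⟨z, hzK, hzM⟩, hn⟩
  have hmeet : (closedBall 0 (max M R) ∩ F n '' K).Nonempty :=
    ⟨F n z, mem_closedBall_zero_iff.2 (hzM.trans (le_max_left M R)), z, hzK, rfl⟩
  have hdisj : Disjoint (closedBall 0 (max M R)) (F n '' frontier K) := by
    refine disjoint_right.2 ?_
    rintro _ ⟨x, hx, rfl⟩ hball
    exact (hn x hx).not_ge (mem_closedBall_zero_iff.1 hball)
  exact (closedBall_subset_closedBall (le_max_right M R)).trans
    (subset_image_of_disjoint_image_frontier (hFo n) (hK.image (hFc n)).isClosed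
      (convex_closedBall 0 _).isPreconnected hmeet hdisj)

end UniformDivergence

/-- The escaping set `I(f)` of points whose forward orbit under `f` tends to `∞`. On the Fatou set
it is a union of components, which is how escape of one orbit is passed on to its component. -/
def EscapingSet (f : ℂ → ℂ) : Set ℂ :=
  {z | Tendsto (fun n => f^[n] z) atTop (cobounded ℂ)}

section FatouSet

variable {f : ℂ → ℂ} {V K : Set ℂ} {z : ℂ}

theorem UnifDiverges.normalOn (h : UnifDiverges (fun n => f^[n]) V) : NormalOn f V := by
  refine fun s hs => ⟨id, strictMono_id, .inr fun K hK _ M => ?_⟩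
  exact (hs.tendsto_atTop.eventually (h M)).mono fun n hn z hz => hn z (hK hz)

theorem NormalOn.unifDiverges (hV : NormalOn f V) (hVf : (V ∩ EscapingSet f).Nonempty)
    (hKV : K ⊆ V) (hK : IsCompact K) : UnifDiverges (fun n => f^[n]) K := by
  obtain ⟨z, hzV, hz⟩ := hVf
  intro M
  by_contra hM
  obtain ⟨s, hs, hsM⟩ := extraction_of_frequently_atTop (not_eventually.1 hM)
  obtain ⟨t, ht, ⟨g, hg⟩ | hdiv⟩ := hV s hs
  · have hconv : Tendsto (fun n => f^[s (t n)] z) atTop (𝓝 (g z)) := hg.tendsto_at hzV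
    exact hconv.not_tendsto (disjoint_nhds_cobounded _) (hz.comp (hs.comp ht).tendsto_atTop)
  · obtain ⟨n, hn⟩ := (hdiv K hKV hK M).exists
    exact hsM (t n) hn

theorem NormalOn.subset_escapingSet (hV : NormalOn f V) (hVf : (V ∩ EscapingSet f).Nonempty) :
    V ⊆ EscapingSet f := fun _ hz =>
  (hV.unifDiverges hVf (singleton_subset_iff.2 hz) isCompact_singleton).tendsto_cobounded
    (mem_singleton _)

theorem isOpen_fatouSet (f : ℂ → ℂ) : IsOpen (FatouSet f) :=
  isOpen_iff_forall_mem_open.2 fun _ ⟨V, hVo, hzV, hV⟩ =>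
    ⟨V, fun _ hy => ⟨V, hVo, hy, hV⟩, hVo, hzV⟩

theorem disjoint_fatouSet_frontier_escapingSet (f : ℂ → ℂ) :
    Disjoint (FatouSet f) (frontier (EscapingSet f)) := by
  refine disjoint_left.2 fun z ⟨V, hVo, hzV, hV⟩ hz => hz.2 ?_
  exact mem_interior.2
    ⟨V, hV.subset_escapingSet (mem_closure_iff.1 hz.1 V hVo hzV), hVo, hzV⟩

theorem connectedComponentIn_fatouSet_subset_escapingSet (hz : z ∈ EscapingSet f) :
    connectedComponentIn (FatouSet f) z ⊆ EscapingSet f := by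
  by_cases hzF : z ∈ FatouSet f
  · exact subset_of_isPreconnected_of_disjoint_frontier isPreconnected_connectedComponentIn
      ⟨z, mem_connectedComponentIn hzF, hz⟩
      ((disjoint_fatouSet_frontier_escapingSet f).mono_left (connectedComponentIn_subset _ _))
  · exact connectedComponentIn_eq_empty hzF ▸ empty_subset _

theorem unifDiverges_of_subset_fatouSet_inter_escapingSet (hK : IsCompact K)
    (hKf : K ⊆ FatouSet f ∩ EscapingSet f) : UnifDiverges (fun n => f^[n]) K := by
  refine unifDiverges_of_forall_exists_nhdsWithin hK fun z hz => ?_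
  obtain ⟨⟨V, hVo, hzV, hV⟩, hzf⟩ := hKf hz
  obtain ⟨L, hL, hzL, hLV⟩ := exists_compact_subset hVo hzV
  exact ⟨L, mem_nhdsWithin_of_mem_nhds (mem_interior_iff_mem_nhds.1 hzL),
    hV.unifDiverges ⟨z, hzV, hzf⟩ hLV hL⟩

theorem not_unifDiverges_of_frontier_subset_connectedComponentIn {w : ℂ} (hK : IsCompact K)
    (hfr : frontier K ⊆ connectedComponentIn (FatouSet f) z) (hwK : w ∈ K)
    (hw : w ∉ connectedComponentIn (FatouSet f) z) : ¬ UnifDiverges (fun n => f^[n]) K := by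
  intro hdiv
  have hKF : K ⊆ FatouSet f := fun x hx => by
    by_cases hxi : x ∈ interior K
    · exact ⟨interior K, isOpen_interior, hxi,
        UnifDiverges.normalOn fun M => (hdiv M).mono fun n hn y hy => hn y (interior_subset hy)⟩
    · exact connectedComponentIn_subset _ _ (hfr ⟨subset_closure hx, hxi⟩)
  obtain ⟨x, hxw, hx⟩ := connectedComponentIn_inter_frontier_nonempty (isOpen_fatouSet f)
    hK.isClosed hKF hK.ne_univ hwK
  rw [connectedComponentIn_eq (hfr hx), ← connectedComponentIn_eq hxw] at hw
  exact hw (mem_connectedComponentIn (hKF hwK))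

end FatouSet

theorem MultiplyConnected.exists_isCompact_frontier_subset {W : Set ℂ} (hW : MultiplyConnected W)
    (hWo : IsOpen W) : ∃ w ∉ W, ∃ K, IsCompact K ∧ w ∈ K ∧ frontier K ⊆ W := by
  obtain ⟨w, hw, hb⟩ := hW
  have hc : IsCompact (connectedComponentIn Wᶜ w) :=
    isCompact_of_isClosed_isBounded (isClosed_connectedComponentIn hWo.isClosed_compl w) hb
  obtain ⟨K, hK, hwK, hd⟩ :=
    exists_isCompact_disjoint_frontier_of_isCompact_connectedComponentIn hWo.isClosed_compl hw hc
  exact ⟨w, hw, K, hK, hwK, disjoint_compl_right_iff_subset.1 hd⟩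

theorem TranscEntire.isOpenMap {f : ℂ → ℂ} (hf : TranscEntire f) : IsOpenMap f := by
  have hana : AnalyticOnNhd ℂ f univ := fun z _ => hf.1.analyticAt z
  refine hana.is_constant_or_isOpenMap.resolve_left fun ⟨c, hc⟩ => hf.2 ⟨Polynomial.C c, ?_⟩
  exact funext fun z => (hc z).trans Polynomial.eval_C.symm

theorem IsBakerWanderingDomain.exists_multiplyConnected {f : ℂ → ℂ} {U : Set ℂ}
    (hU : IsBakerWanderingDomain f U) :
    ∃ z ∈ EscapingSet f, MultiplyConnected (connectedComponentIn (FatouSet f) z) := by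
  obtain ⟨z₀, hz₀, rfl, -, ⟨N, hN⟩, hesc⟩ := hU
  refine ⟨f^[N] z₀, ?_, (hN N le_rfl).2.1⟩
  have hshift := (tendsto_add_atTop_iff_nat N).2 (hesc z₀ (mem_connectedComponentIn hz₀))
  simpa only [EscapingSet, mem_ofPred_eq, Function.iterate_add_apply] using hshift

section BakerOmitted

variable {f : ℂ → ℂ}

theorem isBounded_of_isBounded_image_of_multiplyConnected (hfc : Continuous f)
    (hfo : IsOpenMap f) {z : ℂ} (hz : z ∈ EscapingSet f)
    (hW : MultiplyConnected (connectedComponentIn (FatouSet f) z)) {Γ : Set ℂ}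
    (hΓ : IsPreconnected Γ) (hfΓ : IsBounded (f '' Γ)) : IsBounded Γ := by
  obtain rfl | ⟨p, hp⟩ := Γ.eq_empty_or_nonempty
  · exact isBounded_empty
  obtain ⟨w, hwW, K, hK, hwK, hKW⟩ :=
    hW.exists_isCompact_frontier_subset (isOpen_fatouSet f).connectedComponentIn
  have hfr : UnifDiverges (fun n => f^[n]) (frontier K) :=
    unifDiverges_of_subset_fatouSet_inter_escapingSet
      (hK.of_isClosed_subset isClosed_frontier hK.isClosed.frontier_subset)
      (hKW.trans (subset_inter (connectedComponentIn_subset _ _)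
        (connectedComponentIn_fatouSet_subset_escapingSet hz)))
  have hcover := frequently_closedBall_subset_image hfc.iterate (isOpenMap_iterate hfo) hK hfr
    (not_unifDiverges_of_frontier_subset_connectedComponentIn hK hKW hwK hwW) ‖p‖
  obtain ⟨R, hR⟩ := hfΓ.exists_norm_le
  obtain ⟨n, hpn, hn⟩ := (hcover.and_eventually
    ((tendsto_add_atTop_nat 1).eventually (hfr R))).exists
  have hKn : IsCompact (f^[n] '' K) := hK.image (hfc.iterate n)
  have hdisj : Disjoint Γ (f^[n] '' frontier K) := by
    refine disjoint_right.2 ?_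
    rintro _ ⟨x, hx, rfl⟩ hxΓ
    have hlarge : R < ‖f (f^[n] x)‖ := by simpa only [Function.iterate_succ_apply'] using hn x hx
    exact hlarge.not_ge (hR _ ⟨_, hxΓ, rfl⟩)
  exact hKn.isBounded.subset <|
    subset_image_of_disjoint_image_frontier (isOpenMap_iterate hfo n) hKn.isClosed hΓ
      ⟨p, hp, hpn (mem_closedBall_zero_iff.2 le_rfl)⟩ hdisj

theorem bakerOmittedValueInf_of_forall_isPreconnected (hf : Continuous f)
    (h : ∀ Γ : Set ℂ, IsPreconnected Γ → IsBounded (f '' Γ) → IsBounded Γ) :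
    BakerOmittedValueInf f := by
  refine ⟨1, one_pos, fun R _ z _ => h _ isPreconnected_connectedComponentIn ?_⟩
  refine isBounded_iff_forall_norm_le.2 ⟨R, ?_⟩
  rintro _ ⟨y, hy, rfl⟩
  have hyR : R = ‖f y‖ :=
    frontier_lt_subset_eq continuous_const hf.norm (connectedComponentIn_subset _ _ hy)
  exact hyR.ge

theorem not_isBounded_image_of_tendsto_cobounded {α E : Type*} [Bornology E] {l : Filter α}
    [l.NeBot] {g : α → E} (hg : Tendsto g l (cobounded E)) {s : Set α} (hs : s ∈ l) :
    ¬ IsBounded (g '' s) := by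
  intro hb
  obtain ⟨t, ht, hts⟩ := ((hg.eventually (isBounded_def.1 hb)).and hs).exists
  exact ht ⟨t, hts, rfl⟩

theorem stmt13_general (hfc : Continuous f) (hfo : IsOpenMap f)
    (hesc : ∃ z ∈ EscapingSet f, MultiplyConnected (connectedComponentIn (FatouSet f) z)) :
    BakerOmittedValueInf f ∧
      ∀ Γ : Set ℂ, IsPreconnected Γ → ¬ IsBounded Γ → ¬ IsBounded (f '' Γ) := by
  obtain ⟨z, hz, hW⟩ := hesc
  have hb : ∀ Γ : Set ℂ, IsPreconnected Γ → IsBounded (f '' Γ) → IsBounded Γ := fun _ =>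
    isBounded_of_isBounded_image_of_multiplyConnected hfc hfo hz hW
  exact ⟨bakerOmittedValueInf_of_forall_isPreconnected hfc hb, fun Γ hΓ => mt (hb Γ hΓ)⟩

end BakerOmitted

/-- If a transcendental entire function has a Baker wandering
domain, then `∞` is its Baker omitted value; i.e. the image of every unbounded
curve under `f` is unbounded. -/
theorem stmt13 (f : ℂ → ℂ) (hf : TranscEntire f)
    (hU : ∃ U : Set ℂ, IsBakerWanderingDomain f U) :
    BakerOmittedValueInf f ∧
      (∀ γ : ℝ → ℂ, ContinuousOn γ (Set.Ici 0) → Tendsto γ atTop (Bornology.cobounded ℂ) → ¬ Bornology.IsBounded (f '' (γ '' Set.Ici 0))) := by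
  obtain ⟨U, hU⟩ := hU
  refine (stmt13_general hf.1.continuous hf.isOpenMap hU.exists_multiplyConnected).imp_right ?_
  exact fun h γ hγ hlim =>
    h _ (isPreconnected_Ici.image γ hγ)
      (not_isBounded_image_of_tendsto_cobounded hlim (Ici_mem_atTop 0))
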